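/- arXiv:1509.00820 — 2 statements merged into one kernel-verified Lean document; each statement's English description precedes it below -/
import Mathlib

section
/- Let f : ℝ → ℝ be a polynomial function. Define u(t,ξ) = ∑_{n=0}^∞ (tⁿ/n!) f^{(2n)}(ξ), where f^{(2n)} denotes the 2n-th derivative of f (the sum is finite since f is a polynomial). Then u satisfies the one-dimensional heat equation ∂u/∂t = ∂²u/∂ξ² for all t, ξ ∈ ℝ, with initial condition u(0,ξ) = f(ξ). -/
/-! Let `Sₙ(t)` be the sum of the first `n` terms of the exponential series of `t • a`. Termwise
differentiation gives `∂ₜ Sₙ₊₁ = a * Sₙ` exactly. If `a` is a positive power of the derivative, then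
applied to a polynomial both `Sₙ₊₁` and `Sₙ` equal the full series once `n` exceeds the degree, and
this identity becomes the evolution equation. -/

open Finset Polynomial
open scoped Nat

section ExpPartialSum

variable {𝕜 A : Type*} [Semiring A]

/-- The sum of the first `N` terms of the exponential series of `t • a`. Since it is a finite sum,
it needs no topology on the algebra, so `a` may be an operator on polynomials. -/
def expPartialSum [Field 𝕜] [Algebra 𝕜 A] (a : A) (N : ℕ) (t : 𝕜) : A :=
  ∑ n ∈ range N, (t ^ n / (n ! : 𝕜)) • a ^ n

theorem expPartialSum_succ_zero [Field 𝕜] [Algebra 𝕜 A] (a : A) (N : ℕ) :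
    expPartialSum a (N + 1) (0 : 𝕜) = 1 := by
  simp [expPartialSum, sum_range_succ']

theorem hasDerivAt_pow_succ_div_factorial [NontriviallyNormedField 𝕜] [CharZero 𝕜]
    (n : ℕ) (t : 𝕜) :
    HasDerivAt (fun s : 𝕜 => s ^ (n + 1) / ((n + 1)! : 𝕜)) (t ^ n / (n ! : 𝕜)) t := by
  have hn : (n + 1 : 𝕜) ≠ 0 := n.cast_add_one_ne_zero
  refine ((hasDerivAt_pow (n + 1) t).div_const ((n + 1)! : 𝕜)).congr_deriv ?_
  rw [Nat.factorial_succ, Nat.cast_mul, Nat.cast_succ, Nat.add_sub_cancel,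
    mul_div_mul_left _ _ hn]

theorem hasDerivAt_linearMap_expPartialSum_succ [NontriviallyNormedField 𝕜] [CharZero 𝕜]
    [Algebra 𝕜 A] {E : Type*} [NormedAddCommGroup E] [NormedSpace 𝕜 E]
    (L : A →ₗ[𝕜] E) (a : A) (N : ℕ) (t : 𝕜) :
    HasDerivAt (fun s : 𝕜 => L (expPartialSum a (N + 1) s)) (L (a * expPartialSum a N t)) t := by
  have hterm (n : ℕ) : HasDerivAt (fun s : 𝕜 => (s ^ (n + 1) / ((n + 1)! : 𝕜)) • L (a ^ (n + 1)))
      ((t ^ n / (n ! : 𝕜)) • L (a ^ (n + 1))) t :=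
    (hasDerivAt_pow_succ_div_factorial n t).smul_const _
  simpa [expPartialSum, sum_range_succ' _ N, mul_sum, ← pow_succ'] using
    HasDerivAt.fun_sum fun n (_ : n ∈ range N) => hterm n

end ExpPartialSum

section Polynomial

variable {𝕜 : Type*} [NontriviallyNormedField 𝕜]

theorem iterate_deriv_polynomial_eval (p : 𝕜[X]) (n : ℕ) :
    deriv^[n] (fun x => p.eval x) = fun x => (derivative^[n] p).eval x := by
  induction n generalizing p with
  | zero => rfl
  | succ n ih =>
    have hderiv : deriv (fun x => p.eval x) = fun x => (derivative p).eval x :=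
      funext fun _ => p.deriv
    rw [Function.iterate_succ_apply, hderiv, ih, Function.iterate_succ_apply]

theorem tsum_iterate_deriv_polynomial_eval {k : ℕ} (hk : k ≠ 0) {p : 𝕜[X]} {N : ℕ}
    (hN : p.natDegree < N) (t ξ : 𝕜) :
    ∑' n : ℕ, (t ^ n / (n ! : 𝕜)) * (deriv^[k * n] (fun x => p.eval x)) ξ =
      (expPartialSum ((derivative : Module.End 𝕜 𝕜[X]) ^ k) N t p).eval ξ := by
  have hvanish (n : ℕ) (hn : n ∉ range N) : derivative^[k * n] p = 0 := by
    have hNn : N ≤ n := by simpa using hn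
    exact iterate_derivative_eq_zero
      (hN.trans_le (hNn.trans (Nat.le_mul_of_pos_left n (Nat.pos_of_ne_zero hk))))
  simp only [iterate_deriv_polynomial_eval]
  rw [tsum_eq_sum fun n hn => by rw [hvanish n hn, eval_zero, mul_zero]]
  simp [expPartialSum, eval_finsetSum, ← pow_mul, Module.End.pow_apply]

theorem heat_equation_polynomial_solution_general [CharZero 𝕜] {k : ℕ} (hk : k ≠ 0)
    (p : 𝕜[X]) (u : 𝕜 → 𝕜 → 𝕜)
    (hu : ∀ t ξ : 𝕜, u t ξ =
      ∑' n : ℕ, (t ^ n / (n ! : 𝕜)) * (deriv^[k * n] (fun x => p.eval x)) ξ) :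
    (∀ t ξ : 𝕜, HasDerivAt (fun s => u s ξ) ((deriv^[k] (u t)) ξ) t) ∧
      (∀ ξ : 𝕜, u 0 ξ = p.eval ξ) := by
  let D : Module.End 𝕜 𝕜[X] := derivative ^ k
  have hsum {N : ℕ} (hN : p.natDegree < N) (t : 𝕜) :
      u t = fun ξ => (expPartialSum D N t p).eval ξ :=
    funext fun ξ => (hu t ξ).trans (tsum_iterate_deriv_polynomial_eval hk hN t ξ)
  have hdeg : p.natDegree < p.natDegree + 1 := Nat.lt_succ_self _
  refine ⟨fun t ξ => ?_, fun ξ => ?_⟩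
  · have hspace : (deriv^[k] (u t)) ξ =
        ((D * expPartialSum D (p.natDegree + 1) t) p).eval ξ := by
      rw [hsum hdeg, iterate_deriv_polynomial_eval, Module.End.mul_apply, Module.End.pow_apply]
    rw [hspace]
    simp only [hsum (hdeg.trans (Nat.lt_succ_self _))]
    exact hasDerivAt_linearMap_expPartialSum_succ (leval ξ ∘ₗ LinearMap.applyₗ p) D _ t
  · rw [hsum hdeg, expPartialSum_succ_zero, Module.End.one_apply]

end Polynomial

/-- **Operator-exponential solution of the heat equation for polynomial data.**
For a polynomial `f`, the (finite) series `u(t,ξ) = ∑_{n≥0} (tⁿ/n!) f^{(2n)}(ξ)` solves the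
one-dimensional heat equation `∂_t u = ∂²_ξ u` with initial condition `u(0,·) = f`. -/
theorem heat_equation_polynomial_solution
    (p : Polynomial ℝ) (f : ℝ → ℝ) (hf : ∀ x : ℝ, f x = p.eval x)
    (u : ℝ → ℝ → ℝ)
    (hu : ∀ t ξ : ℝ, u t ξ = ∑' n : ℕ, (t ^ n / (n.factorial : ℝ)) * (deriv^[2 * n] f) ξ) :
    (∀ t ξ : ℝ, deriv (fun s => u s ξ) t = deriv (deriv (u t)) ξ) ∧
      (∀ ξ : ℝ, u 0 ξ = f ξ) := by
  obtain rfl : f = fun x => p.eval x := funext hf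
  obtain ⟨hheat, hinit⟩ := heat_equation_polynomial_solution_general two_ne_zero p u hu
  exact ⟨fun t ξ => (hheat t ξ).deriv, hinit⟩
end

section
/- Let T₀ : ℝ → ℝ be a polynomial function of the radial variable ξ. Define T(t,ξ) = t + (1/ξ) ∑_{n=0}^∞ (tⁿ/n!) d^{2n}/dξ^{2n} [ξ T₀(ξ)] for ξ > 0 (the sum is finite since ξ T₀(ξ) is a polynomial). Then T satisfies the radially symmetric heat equation with unit source ∂T/∂t = ∂²T/∂ξ² + (2/ξ) ∂T/∂ξ + 1 for all t ∈ ℝ and all ξ > 0, with initial condition T(0,ξ) = T₀(ξ). -/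
/-!
Substituting `T(t, ξ) = t + g(t, ξ) / ξ` turns the radial equation with unit source into the
one-dimensional heat equation `∂_t g = ∂²_ξ g` for `g`, because the radial part of the
three-dimensional Laplacian sends `f(ξ) / ξ` to `f''(ξ) / ξ`. For polynomial initial data `q` the
heat equation is solved by the terminating exponential series of `t · d²/dξ²` applied to `q`; the
initial data belonging to `T₀` are `q = ξ T₀`.
-/

open Polynomial Topology

section RadialLaplacian

variable {𝕜 : Type*} [NontriviallyNormedField 𝕜]

/-- The radial part `f'' + (2 / x) f'` of the three-dimensional Laplacian, acting on the profile
`f` of a radially symmetric function. Only its values at `x ≠ 0` are meaningful. -/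
noncomputable def radialLaplacian (f : 𝕜 → 𝕜) (x : 𝕜) : 𝕜 :=
  deriv (deriv f) x + (2 / x) * deriv f x

theorem radialLaplacian_const_add (c : 𝕜) (f : 𝕜 → 𝕜) :
    radialLaplacian (fun y => c + f y) = radialLaplacian f := by
  have h : deriv (fun y => c + f y) = deriv f := funext fun _ => deriv_const_add c
  funext x
  rw [radialLaplacian, radialLaplacian, h]

theorem radialLaplacian_div_id {f : 𝕜 → 𝕜} {x : 𝕜} (hx : x ≠ 0)
    (hf : ∀ᶠ y in 𝓝 x, DifferentiableAt 𝕜 f y) (hf' : DifferentiableAt 𝕜 (deriv f) x) :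
    radialLaplacian (fun y => f y / y) x = deriv (deriv f) x / x := by
  have deriv_quotient :
      deriv (fun y => f y / y) =ᶠ[𝓝 x] fun y => (deriv f y * y - f y) / y ^ 2 := by
    filter_upwards [hf, eventually_ne_nhds hx] with y hfy hy
    simpa only [mul_one] using (hfy.hasDerivAt.fun_div (hasDerivAt_id' y) hy).deriv
  have deriv_deriv_quotient :=
    ((hf'.hasDerivAt.fun_mul (hasDerivAt_id' x)).fun_sub hf.self_of_nhds.hasDerivAt).fun_div
      (hasDerivAt_pow 2 x) (pow_ne_zero 2 hx)
  rw [radialLaplacian, deriv_quotient.deriv_eq, deriv_quotient.self_of_nhds,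
    deriv_deriv_quotient.deriv]
  field_simp
  ring

theorem deriv_add_div_eq_radialLaplacian_add_one {g : 𝕜 → 𝕜 → 𝕜} {t x : 𝕜} (hx : x ≠ 0)
    (hg : ∀ᶠ y in 𝓝 x, DifferentiableAt 𝕜 (g t) y) (hg' : DifferentiableAt 𝕜 (deriv (g t)) x)
    (heat : HasDerivAt (fun s => g s x) (deriv (deriv (g t)) x) t) :
    deriv (fun s => s + g s x / x) t = radialLaplacian (fun y => t + g t y / y) x + 1 := by
  rw [radialLaplacian_const_add, radialLaplacian_div_id hx hg hg',
    ((hasDerivAt_id' t).fun_add (heat.div_const x)).deriv, add_comm]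

end RadialLaplacian

section PolynomialHeatFlow

variable {K : Type*} [Field K]

/-- The solution at time `t` of the one-dimensional heat equation `∂_t g = ∂²_x g` with initial
value `q`, namely the exponential series `∑ (tⁿ / n!) q⁽²ⁿ⁾`. Since `q⁽²ⁿ⁾ = 0` for
`n > deg q`, the series is encoded by a finite sum. -/
noncomputable def heatFlow (q : K[X]) (t : K) : K[X] :=
  ∑ n ∈ Finset.range (q.natDegree + 1), C (t ^ n / (n.factorial : K)) * derivative^[2 * n] q

theorem heatFlow_zero (q : K[X]) : heatFlow q 0 = q := by
  simp [heatFlow, Finset.sum_range_succ']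

theorem eval_heatFlow (q : K[X]) (t x : K) :
    (heatFlow q t).eval x = ∑ n ∈ Finset.range (q.natDegree + 1),
      t ^ n / (n.factorial : K) * (derivative^[2 * n] q).eval x := by
  simp only [heatFlow, eval_finsetSum, eval_mul, eval_C]

theorem eval_derivative_derivative_heatFlow (q : K[X]) (t x : K) :
    (derivative (derivative (heatFlow q t))).eval x = ∑ n ∈ Finset.range q.natDegree,
      t ^ n / (n.factorial : K) * (derivative^[2 * (n + 1)] q).eval x := by
  have top_eq_zero : derivative^[2 * (q.natDegree + 1)] q = 0 :=
    iterate_derivative_eq_zero (by lia)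
  have two_more (n : ℕ) :
      derivative (derivative (derivative^[2 * n] q)) = derivative^[2 * (n + 1)] q := by
    rw [Nat.mul_succ, Function.iterate_succ_apply', Function.iterate_succ_apply']
  simp only [heatFlow, derivative_sum, derivative_C_mul, two_more, eval_finsetSum, eval_mul,
    eval_C]
  rw [Finset.sum_range_succ, top_eq_zero, eval_zero, mul_zero, add_zero]

variable {𝕜 : Type*} [NontriviallyNormedField 𝕜]

theorem iterate_deriv_eval (q : 𝕜[X]) (k : ℕ) :
    deriv^[k] (fun x => q.eval x) = fun x => (derivative^[k] q).eval x := by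
  induction k with
  | zero => rfl
  | succ k ih =>
    rw [Function.iterate_succ_apply', ih, Function.iterate_succ_apply']
    exact funext fun _ => Polynomial.deriv _

theorem tsum_iterate_deriv_eval_eq_eval_heatFlow (q : 𝕜[X]) (t x : 𝕜) :
    ∑' n : ℕ, t ^ n / (n.factorial : 𝕜) * deriv^[2 * n] (fun y => q.eval y) x =
      (heatFlow q t).eval x := by
  simp only [iterate_deriv_eval, eval_heatFlow]
  refine tsum_eq_sum fun n hn => ?_
  have derivative_eq_zero : derivative^[2 * n] q = 0 :=
    iterate_derivative_eq_zero (by rw [Finset.mem_range] at hn; lia)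
  rw [derivative_eq_zero, eval_zero, mul_zero]

theorem hasDerivAt_pow_div_factorial [CharZero 𝕜] (n : ℕ) (t : 𝕜) :
    HasDerivAt (fun s : 𝕜 => s ^ (n + 1) / ((n + 1).factorial : 𝕜))
      (t ^ n / (n.factorial : 𝕜)) t := by
  refine ((hasDerivAt_pow (n + 1) t).div_const _).congr_deriv ?_
  rw [Nat.factorial_succ, Nat.cast_mul, Nat.add_sub_cancel,
    mul_div_mul_left _ _ (Nat.cast_ne_zero.mpr n.succ_ne_zero)]

theorem hasDerivAt_sum_pow_div_factorial_mul [CharZero 𝕜] (a : ℕ → 𝕜) (N : ℕ) (t : 𝕜) :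
    HasDerivAt (fun s => ∑ n ∈ Finset.range (N + 1), s ^ n / (n.factorial : 𝕜) * a n)
      (∑ n ∈ Finset.range N, t ^ n / (n.factorial : 𝕜) * a (n + 1)) t := by
  simp only [Finset.sum_range_succ', pow_zero]
  exact (HasDerivAt.fun_sum fun n _ =>
    (hasDerivAt_pow_div_factorial n t).mul_const (a (n + 1))).add_const _

theorem hasDerivAt_eval_heatFlow [CharZero 𝕜] (q : 𝕜[X]) (t x : 𝕜) :
    HasDerivAt (fun s => (heatFlow q s).eval x)
      ((derivative (derivative (heatFlow q t))).eval x) t := by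
  simp only [eval_heatFlow, eval_derivative_derivative_heatFlow]
  exact hasDerivAt_sum_pow_div_factorial_mul
    (fun n => (derivative^[2 * n] q).eval x) q.natDegree t

end PolynomialHeatFlow

theorem radial_heat_source_series_solution_general
    {𝕜 : Type*} [NontriviallyNormedField 𝕜] [CharZero 𝕜]
    (p : 𝕜[X]) (T₀ : 𝕜 → 𝕜) (hT₀ : ∀ x : 𝕜, T₀ x = p.eval x)
    (T : 𝕜 → 𝕜 → 𝕜)
    (hT : ∀ t ξ : 𝕜, T t ξ =
      t + (1 / ξ) * ∑' n : ℕ,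
        (t ^ n / (n.factorial : 𝕜)) * (deriv^[2 * n] (fun x : 𝕜 => x * T₀ x)) ξ) :
    (∀ t : 𝕜, ∀ ξ : 𝕜, ξ ≠ 0 →
      deriv (fun s => T s ξ) t =
        deriv (deriv (T t)) ξ + (2 / ξ) * deriv (T t) ξ + 1) ∧
      (∀ ξ : 𝕜, ξ ≠ 0 → T 0 ξ = T₀ ξ) := by
  have initial_eq : (fun x => x * T₀ x) = fun x => (X * p).eval x := by
    simp only [hT₀, eval_mul, eval_X]
  have T_eq : T = fun t ξ => t + (heatFlow (X * p) t).eval ξ / ξ := by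
    funext t ξ
    rw [hT, initial_eq, tsum_iterate_deriv_eval_eq_eval_heatFlow, one_div_mul_eq_div]
  subst T_eq
  refine ⟨fun t ξ hξ => ?_, fun ξ hξ => ?_⟩
  · have deriv_eval (q : 𝕜[X]) : deriv (fun x => q.eval x) = fun x => (derivative q).eval x :=
      iterate_deriv_eval q 1
    refine deriv_add_div_eq_radialLaplacian_add_one
      (g := fun s y => (heatFlow (X * p) s).eval y) hξ
      (.of_forall fun _ => Polynomial.differentiableAt _) ?_ ?_
    · simpa only [deriv_eval] using Polynomial.differentiableAt _
    · simpa only [deriv_eval] using hasDerivAt_eval_heatFlow (X * p) t ξ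
  · simp only [heatFlow_zero, eval_mul, eval_X, zero_add, hT₀, mul_div_cancel_left₀ _ hξ]

/-- **Series solution of the radially symmetric heat equation with unit source.**
For a polynomial initial temperature `T₀(ξ)`, the function
`T(t,ξ) = t + (1/ξ) ∑_{n≥0} (tⁿ/n!) (d²/dξ²)ⁿ [ξ T₀(ξ)]` satisfies
`∂_t T = ∂²_ξ T + (2/ξ) ∂_ξ T + 1` for all `t` and all `ξ > 0`, with `T(0,ξ) = T₀(ξ)`. -/
theorem radial_heat_source_series_solution
    (p : Polynomial ℝ) (T₀ : ℝ → ℝ) (hT₀ : ∀ x : ℝ, T₀ x = p.eval x)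
    (T : ℝ → ℝ → ℝ)
    (hT : ∀ t ξ : ℝ, T t ξ =
      t + (1 / ξ) * ∑' n : ℕ,
        (t ^ n / (n.factorial : ℝ)) * (deriv^[2 * n] (fun x : ℝ => x * T₀ x)) ξ) :
    (∀ t : ℝ, ∀ ξ : ℝ, 0 < ξ →
      deriv (fun s => T s ξ) t =
        deriv (deriv (T t)) ξ + (2 / ξ) * deriv (T t) ξ + 1) ∧
      (∀ ξ : ℝ, 0 < ξ → T 0 ξ = T₀ ξ) := by
  have solution := radial_heat_source_series_solution_general p T₀ hT₀ T hT
  exact ⟨fun t ξ hξ => solution.1 t ξ hξ.ne', fun ξ hξ => solution.2 ξ hξ.ne'⟩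
end
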